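/- Let P(T,t) = (−1+48t−576t²−256t³) + (1−60t+912t²−512t³)T + (10t−312t²+624t³−512t⁴)T² + (45t²−504t³−576t⁴)T³ + (117t³−252t⁴−288t⁵)T⁴ + 189t⁴T⁵ + 189t⁵T⁶ + 108t⁶T⁷ + 27t⁷T⁸. Then the generating function of Gessel excursions G(t;0,0) = Σ_{n≥0} g(n;0,0) tⁿ satisfies P(G(t;0,0), t²) = 0 in ℚ[[t]]. -/

import Mathlib

/-!
The proof is elementary and uses pairs of rational and algebraic invariants on the kernel curve
`K(x,y) = xy - t(1 + y + x²y + x²y²) = 0`.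

Decomposing walks by their last step gives `functional_equation`,
`K(x,y) G(x,y) = xy - t G(x,0) - t (1 + y) G(0,y) + t G(0,0)`. It says that the series
`v(x) = 1/x + t G(x,0)` and `v(y) = y/(t(1+y)) - t (1+y) G(0,y) + t G(0,0)` coincide on the curve
`K = 0`. On the same curve the rational functions `I₀(x) = (x + 1/x)(1/t - x - 1/x)` and
`J₀(y) = (1-y)²/y + y/(t²(1+y)²)` coincide as well. Choose `α`, `β`, `γ` (explicit series built
from the walks ending at `(0,0)`, `(1,0)`, `(2,0)`) so that
`I₀(x) v(x) + v(x)³ - α v(x)² - β v(x) - γ` vanishes at `x = 0`. Its difference with the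
corresponding expression in `y` is then, after clearing denominators, divisible by `K`
(`kernel_dvd`), while having no pole at `x = 0` or `y = 0`. A separated series of this kind is zero
(`invariant_separated`: in each power of `t` one compares the two sides modulo `x` and `y`), so
that both `I₀(x)` and `J₀(y)` equal `φ(v)`, where `φ(v) = -v² + α v + β + γ/v`. This is
`invariant_equations`.

Differentiating `I₀(x) = φ(v(x))` shows that a critical point of `I₀` is sent by `v` to a critical
point of `φ` with the same value, because `v'` does not vanish there. The critical points
`x = 1`, `x = -1` of `I₀` and `y = 1` of `J₀` give the three critical points of `φ`, with critical
values `2/t - 4`, `-2/t - 4` and `1/(4t²)` (`critical_one`, `critical_neg_one`, `critical_y`).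
Since `φ` has the three unknown coefficients `α`, `β`, `γ`, these values determine it up to
finitely many choices: with `d` the half-difference of the first two critical points and
`tα = 1 + 2 t² G(0,0)`, `critical_elimination` produces two polynomial equations relating `tα`
and `d`, and `final_elimination` removes `d`, which leaves `P(G(0,0), t²) = 0`.
-/

noncomputable section

/-- The set of admissible steps for Gessel walks. -/
def gesselSteps : Set (ℤ × ℤ) := {(1, 0), (-1, 0), (1, 1), (-1, -1)}

/-- The position of the walk `w` after its first `k` steps. -/
def walkPos {n : ℕ} (w : Fin n → ℤ × ℤ) (k : ℕ) : ℤ × ℤ :=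
  ∑ m ∈ Finset.univ.filter (fun m : Fin n => (m : ℕ) < k), w m

/-- `w` is a Gessel walk: every step is admissible and the walk (which starts at
the origin) never leaves the first quadrant. -/
def IsGesselWalk {n : ℕ} (w : Fin n → ℤ × ℤ) : Prop :=
  (∀ m, w m ∈ gesselSteps) ∧ ∀ k ≤ n, 0 ≤ (walkPos w k).1 ∧ 0 ≤ (walkPos w k).2

/-- The number of Gessel walks of length `n` ending at `(i, j)`. -/
def g (n : ℕ) (i j : ℤ) : ℕ :=
  Nat.card {w : Fin n → ℤ × ℤ // IsGesselWalk w ∧ walkPos w n = (i, j)}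

/-- The generating function `G(t;0,0)` of Gessel excursions. -/
def GesselGF00 : PowerSeries ℚ := PowerSeries.mk fun n => (g n 0 0 : ℚ)

/-- The square of the power series variable, playing the role of `t` in `P(T,t)`,
which is evaluated at `t²`. -/
def s : PowerSeries ℚ := PowerSeries.X ^ 2

/-! ### The step-by-step recursion for Gessel walks -/

/-- The steps of Gessel walks, as a finset. -/
def stepsF : Finset (ℤ × ℤ) := {(1, 0), (-1, 0), (1, 1), (-1, -1)}

/-- The set of Gessel walks of length `n` ending at `p`. -/
abbrev walksTo (n : ℕ) (p : ℤ × ℤ) : Type :=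
  {w : Fin n → ℤ × ℤ // IsGesselWalk w ∧ walkPos w n = p}

lemma mem_stepsF (p : ℤ × ℤ) : p ∈ stepsF ↔ p ∈ gesselSteps := by
  simp [stepsF, gesselSteps]

lemma walkPos_snoc_le {n : ℕ} (w : Fin n → ℤ × ℤ) (st : ℤ × ℤ) {k : ℕ} (hk : k ≤ n) :
    walkPos (Fin.snoc w st : Fin (n + 1) → ℤ × ℤ) k = walkPos w k := by
  simp only [walkPos, Finset.sum_filter]
  rw [Fin.sum_univ_castSucc]
  simp [Fin.snoc_castSucc, Nat.not_lt.2 hk]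

lemma walkPos_snoc_last {n : ℕ} (w : Fin n → ℤ × ℤ) (st : ℤ × ℤ) :
    walkPos (Fin.snoc w st : Fin (n + 1) → ℤ × ℤ) (n + 1) = walkPos w n + st := by
  simp only [walkPos, Finset.sum_filter]
  rw [Fin.sum_univ_castSucc]
  simp [Fin.snoc_castSucc]

lemma isGesselWalk_snoc {n : ℕ} (w : Fin n → ℤ × ℤ) (st : ℤ × ℤ) :
    IsGesselWalk (Fin.snoc w st : Fin (n + 1) → ℤ × ℤ) ↔
      IsGesselWalk w ∧ st ∈ gesselSteps ∧
        0 ≤ (walkPos w n + st).1 ∧ 0 ≤ (walkPos w n + st).2 := by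
  unfold IsGesselWalk
  rw [Fin.forall_fin_succ']
  simp only [Fin.snoc_castSucc, Fin.snoc_last]
  constructor
  · rintro ⟨⟨h1, h2⟩, h3⟩
    refine ⟨⟨h1, fun k hk => ?_⟩, h2, ?_⟩
    · have := h3 k (by omega)
      rwa [walkPos_snoc_le _ _ hk] at this
    · have := h3 (n + 1) le_rfl
      rwa [walkPos_snoc_last] at this
  · rintro ⟨⟨h1, h2⟩, h3, h4⟩
    refine ⟨⟨h1, h3⟩, fun k hk => ?_⟩
    rcases Nat.lt_or_ge n k with h | h
    · obtain rfl : k = n + 1 := by omega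
      rwa [walkPos_snoc_last]
    · rw [walkPos_snoc_le _ _ h]
      exact h2 k h

lemma sigma_walksTo_ext {n : ℕ} {p : ℤ × ℤ} (u v : Σ st : stepsF, walksTo n (p - st))
    (h1 : u.1 = v.1) (h2 : u.2.1 = v.2.1) : u = v := by
  obtain ⟨u1, u2, hu⟩ := u
  obtain ⟨v1, v2, hv⟩ := v
  dsimp only at h1 h2
  subst h1
  subst h2
  rfl

/-- Removing the last step: a walk of length `n + 1` ending in the quadrant amounts to its last
step and a walk of length `n`. -/
def walksToSucc (n : ℕ) (p : ℤ × ℤ) (hp : 0 ≤ p.1 ∧ 0 ≤ p.2) :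
    walksTo (n + 1) p ≃ Σ st : stepsF, walksTo n (p - st) where
  toFun w :=
    have hw : Fin.snoc (Fin.init w.1) (w.1 (Fin.last n)) = w.1 := Fin.snoc_init_self _
    have h1 := w.2.1
    have h2 := w.2.2
    ⟨⟨w.1 (Fin.last n), (mem_stepsF _).2 (w.2.1.1 _)⟩, Fin.init w.1,
      ((isGesselWalk_snoc _ _).1 (hw.symm ▸ h1)).1, by
        rw [← hw, walkPos_snoc_last] at h2
        exact eq_sub_of_add_eq h2⟩
  invFun w := ⟨Fin.snoc w.2.1 w.1.1, by
    obtain ⟨⟨st, hst⟩, w, h1, h2⟩ := w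
    refine ⟨(isGesselWalk_snoc _ _).2 ⟨h1, (mem_stepsF _).1 hst, ?_⟩, ?_⟩
    · change 0 ≤ (walkPos w n + st).1 ∧ 0 ≤ (walkPos w n + st).2
      rw [h2]
      simpa using hp
    · change walkPos (Fin.snoc w st : Fin (n + 1) → ℤ × ℤ) (n + 1) = p
      rw [walkPos_snoc_last, h2]
      simp⟩
  left_inv w := Subtype.ext (Fin.snoc_init_self _)
  right_inv w := by
    obtain ⟨⟨st, hst⟩, w, h1, h2⟩ := w
    exact sigma_walksTo_ext _ _ (Subtype.ext (by simp)) (by simp)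

lemma finite_walksTo (n : ℕ) (p : ℤ × ℤ) : Finite (walksTo n p) := by
  refine Finite.of_injective
    (fun w => fun m => (⟨w.1 m, (mem_stepsF _).2 (w.2.1.1 m)⟩ : stepsF)) ?_
  intro w w' h
  apply Subtype.ext
  funext m
  exact congrArg Subtype.val (congrFun h m)

lemma g_succ (n : ℕ) (i j : ℤ) (hi : 0 ≤ i) (hj : 0 ≤ j) :
    g (n + 1) i j = g n (i - 1) j + g n (i + 1) j + g n (i - 1) (j - 1)
      + g n (i + 1) (j + 1) := by
  have h : ∀ n p, g n p.1 p.2 = Nat.card (walksTo n p) := fun n p => rfl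
  have := finite_walksTo
  rw [h (n + 1) (i, j), Nat.card_congr (walksToSucc n (i, j) ⟨hi, hj⟩), Nat.card_sigma]
  simp only [← h]
  rw [Finset.sum_coe_sort stepsF (fun st => g n ((i, j) - st).1 ((i, j) - st).2), stepsF]
  rw [Finset.sum_insert (by decide), Finset.sum_insert (by decide), Finset.sum_insert (by decide),
    Finset.sum_singleton]
  simp [add_assoc]

lemma g_zero (i j : ℤ) : g 0 i j = if i = 0 ∧ j = 0 then 1 else 0 := by
  have hpos : ∀ (w : Fin 0 → ℤ × ℤ) k, walkPos w k = 0 := by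
    intro w k; simp [walkPos]
  unfold g
  split_ifs with h
  · obtain ⟨rfl, rfl⟩ := h
    rw [Nat.card_eq_one_iff_unique]
    refine ⟨⟨fun a b => Subtype.ext (Subsingleton.elim _ _)⟩, ⟨⟨Fin.elim0, ?_⟩⟩⟩
    simp [IsGesselWalk, hpos]
    rfl
  · rw [Nat.card_eq_zero]
    left
    refine ⟨fun w => h ?_⟩
    have := w.2.2
    rw [hpos] at this
    simpa [eq_comm, Prod.ext_iff] using this

lemma g_neg (n : ℕ) (i j : ℤ) (h : i < 0 ∨ j < 0) : g n i j = 0 := by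
  unfold g
  rw [Nat.card_eq_zero]
  left
  refine ⟨fun w => ?_⟩
  have := w.2.1.2 n le_rfl
  rw [w.2.2] at this
  simp only at this
  omega

lemma g_large (n : ℕ) (i j : ℤ) (h : (n : ℤ) < i ∨ (n : ℤ) < j) : g n i j = 0 := by
  induction n generalizing i j with
  | zero =>
    rw [g_zero, if_neg]
    push_cast at h
    omega
  | succ n ih =>
    by_cases hneg : i < 0 ∨ j < 0
    · exact g_neg _ _ _ hneg
    push_cast at h
    rw [g_succ _ _ _ (by omega) (by omega), ih _ _ (by omega), ih _ _ (by omega),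
      ih _ _ (by omega), ih _ _ (by omega)]

/-! ### Commutative algebra identities -/

/-- The numerator of the identity `I₀ v = -v³ + α v² + β v + γ` on the `x`-side, where
`p = x v`, `a = t α`, `b = β`, `c = t γ`; it has been multiplied by `t x³`. -/
def numX {R : Type*} [CommRing R] (x t p a b c : R) : R :=
  (1 + x ^ 2) * (x - t * (1 + x ^ 2)) * p -
    (-t * p ^ 3 + a * x * p ^ 2 + t * b * x ^ 2 * p + c * x ^ 3)

/-- The numerator of the identity `J₀ v = -v³ + α v² + β v + γ` on the `y`-side, where
`z = t (1 + y) v`, `a = t α`, `b = β`, `c = t γ`; it has been multiplied by `t³ (1 + y)³ y`. -/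
def numY {R : Type*} [CommRing R] (y t z a b c : R) : R :=
  (t ^ 2 * (1 - y ^ 2) ^ 2 + y ^ 2) * z + y * z ^ 3 - (1 + y) * a * y * z ^ 2
    - t ^ 2 * (1 + y) ^ 2 * b * y * z - t ^ 2 * (1 + y) ^ 3 * c * y

/-- The two numerators differ by a multiple of the kernel, as `I₀ - J₀` and `v(x) - v(y)` both
vanish on the kernel curve. -/
lemma kernel_dvd {R : Type*} [CommRing R] (x y t U V q Q a b c : R)
    (h : (x * y - t * (1 + y + x ^ 2 * y + x ^ 2 * y ^ 2)) * Q
      = x * y - t * U - t * (1 + y) * V + t * q) :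
    (x * y - t * (1 + y + x ^ 2 * y + x ^ 2 * y ^ 2)) ∣
      t ^ 2 * (1 + y) ^ 3 * y * numX x t (1 + t * x * U) a b c
        - x ^ 3 * numY y t (y - t ^ 2 * (1 + y) ^ 2 * V + t ^ 2 * (1 + y) * q) a b c := by
  obtain ⟨p, hp⟩ : ∃ p, p = 1 + t * x * U := ⟨_, rfl⟩
  obtain ⟨z, hz⟩ : ∃ z, z = y - t ^ 2 * (1 + y) ^ 2 * V + t ^ 2 * (1 + y) * q := ⟨_, rfl⟩
  rw [← hp, ← hz]
  -- `D` is the cleared form of `J₀(y) - (Φ(v(x)) - Φ(v(y))) / (v(x) - v(y))`, where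
  -- `Φ(v) = -v³ + α v² + β v + γ`; the difference `I₀ v(x) - J₀ v(y)` is split as
  -- `(I₀ - J₀) v(x) + J₀ (v(x) - v(y))`.
  obtain ⟨D, hD⟩ : ∃ D, D = x ^ 2 * (t ^ 2 * (1 - y ^ 2) ^ 2 + y ^ 2) -
      y * (-(t ^ 2 * (1 + y) ^ 2 * p ^ 2 + t * (1 + y) * x * p * z + x ^ 2 * z ^ 2)
        + a * (t * (1 + y) ^ 2 * x * p + (1 + y) * x ^ 2 * z)
        + t ^ 2 * (1 + y) ^ 2 * x ^ 2 * b) := ⟨_, rfl⟩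
  have key : t * (1 + y) * p - x * z = t * (1 + y)
      - (x * y - t * (1 + y + x ^ 2 * y + x ^ 2 * y ^ 2)) * Q * (t * x * (1 + y))
      + x * y * (t * x * (1 + y)) - x * y := by
    rw [h, hp, hz]; ring
  refine ⟨p * (t ^ 2 * (1 + y) ^ 2 * (x ^ 2 + y) - t * (1 + y) * x * y)
    - D * (t * (1 + y) * x * Q + 1), ?_⟩
  unfold numX numY
  linear_combination D * key - (t * (1 + y) * p - x * z) * hD

/-- The choice of `α`, `β`, `γ` makes the `x`-side of the invariant equation vanish at `x = 0`:
besides the factor `x³` coming from clearing denominators, one more factor `x` appears. Here `q`,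
`r₁`, `r₂` are the first coefficients of `G(x,0)` in `x`. -/
lemma numX_dvd {R : Type*} [CommRing R] (x t q r₁ r₂ W : R) :
    ∃ e, numX x t (1 + t * x * (q + r₁ * x + r₂ * x ^ 2 + W * x ^ 3)) (1 + 2 * t ^ 2 * q)
      (-2 - q + 2 * t * r₁ - t ^ 2 * q ^ 2) (1 - t * r₁ + 2 * t ^ 2 * r₂) = x ^ 4 * e := by
  refine ⟨-t - t * r₂ + t * q + 2 * t ^ 2 * W - t ^ 2 * q * r₁ + t ^ 3 * r₁ ^ 2 + 2 * t ^ 3 * q * r₂ -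
    x * t * W + x * t * r₁ - x * t ^ 2 * r₁ ^ 2 - x * t ^ 2 * q - x * t ^ 2 * q * r₂ + 4 * x * t
    ^ 3 * r₁ * r₂ + 2 * x * t ^ 3 * q * W + x * t ^ 4 * q * r₁ ^ 2 + x ^ 2 * t * r₂ - x ^ 2 * t
    ^ 2 * r₁ - 2 * x ^ 2 * t ^ 2 * r₁ * r₂ - x ^ 2 * t ^ 2 * q * W + 3 * x ^ 2 * t ^ 3 * r₂ ^ 2
    + 4 * x ^ 2 * t ^ 3 * r₁ * W + x ^ 2 * t ^ 4 * r₁ ^ 3 + 2 * x ^ 2 * t ^ 4 * q * r₁ * r₂ + x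
    ^ 3 * t * W - x ^ 3 * t ^ 2 * r₂ - x ^ 3 * t ^ 2 * r₂ ^ 2 - 2 * x ^ 3 * t ^ 2 * r₁ * W + 6 *
    x ^ 3 * t ^ 3 * r₂ * W + 3 * x ^ 3 * t ^ 4 * r₁ ^ 2 * r₂ + x ^ 3 * t ^ 4 * q * r₂ ^ 2 + 2 *
    x ^ 3 * t ^ 4 * q * r₁ * W - x ^ 4 * t ^ 2 * W - 2 * x ^ 4 * t ^ 2 * r₂ * W + 3 * x ^ 4 * t
    ^ 3 * W ^ 2 + 3 * x ^ 4 * t ^ 4 * r₁ * r₂ ^ 2 + 3 * x ^ 4 * t ^ 4 * r₁ ^ 2 * W + 2 * x ^ 4 *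
    t ^ 4 * q * r₂ * W - x ^ 5 * t ^ 2 * W ^ 2 + x ^ 5 * t ^ 4 * r₂ ^ 3 + 6 * x ^ 5 * t ^ 4 * r₁
    * r₂ * W + x ^ 5 * t ^ 4 * q * W ^ 2 + 3 * x ^ 6 * t ^ 4 * r₂ ^ 2 * W + 3 * x ^ 6 * t ^ 4 *
    r₁ * W ^ 2 + 3 * x ^ 7 * t ^ 4 * r₂ * W ^ 2 + x ^ 8 * t ^ 4 * W ^ 3, ?_⟩
  unfold numX
  ring

/-- The `y`-numerator vanishes at `y = 0` whatever the values of `a`, `b`, `c`. -/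
lemma numY_dvd {R : Type*} [CommRing R] (y t q V a b c : R) :
    ∃ e, numY y t (y - t ^ 2 * (1 + y) ^ 2 * (q + V * y) + t ^ 2 * (1 + y) * q) a b c
      = y * e := by
  refine ⟨(t ^ 2 * (1 - y ^ 2) ^ 2 + y ^ 2) * (1 - t ^ 2 * (1 + y) * (q + (1 + y) * V))
    + (y - t ^ 2 * (1 + y) ^ 2 * (q + V * y) + t ^ 2 * (1 + y) * q) ^ 3
    - (1 + y) * a * (y - t ^ 2 * (1 + y) ^ 2 * (q + V * y) + t ^ 2 * (1 + y) * q) ^ 2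
    - t ^ 2 * (1 + y) ^ 2 * b * (y - t ^ 2 * (1 + y) ^ 2 * (q + V * y) + t ^ 2 * (1 + y) * q)
    - t ^ 2 * (1 + y) ^ 3 * c, ?_⟩
  unfold numY
  ring

/-- Elimination: the three critical points `v₁`, `v₂`, `z / (2t)` of the rational function
`-v² + α v + β + γ / v`, with critical values `2/t - 4`, `-2/t - 4`, `1/(4t²)`, determine two
algebraic equations for `a = t α` and the half-difference `d` of `v₁` and `v₂`. -/
lemma critical_elimination {R : Type*} [CommRing R] [IsDomain R] [CharZero R]
    (t a b c d v₁ v₂ z : R)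
    (h1 : (2 - 4 * t) * v₁ = -t * v₁ ^ 3 + a * v₁ ^ 2 + t * b * v₁ + c)
    (h1' : 3 * t * v₁ ^ 2 - 2 * a * v₁ - t * b + 2 - 4 * t = 0)
    (h2 : (-2 - 4 * t) * v₂ = -t * v₂ ^ 3 + a * v₂ ^ 2 + t * b * v₂ + c)
    (h2' : 3 * t * v₂ ^ 2 - 2 * a * v₂ - t * b - 2 - 4 * t = 0)
    (h3 : z + z ^ 3 - 2 * a * z ^ 2 - 4 * t ^ 2 * b * z - 8 * t ^ 2 * c = 0)
    (h3' : 1 + 3 * z ^ 2 - 4 * a * z - 4 * t ^ 2 * b = 0)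
    (hd : v₁ - v₂ = 2 * d)
    (ht : t ≠ 0) (hd0 : d ≠ 0) (h13 : 2 * t * v₁ - z ≠ 0) (h23 : 2 * t * v₂ - z ≠ 0) :
    a * d = 1 + 3 * t ^ 2 * d ^ 4 ∧
      (1 + 16 * t ^ 2) * d ^ 2 - 1 - 18 * (t ^ 2 * d ^ 4) + 27 * (t ^ 2 * d ^ 4) ^ 2 = 0 := by
  have two : (2 : R) ≠ 0 := two_ne_zero
  have c1 : c = a * v₁ ^ 2 - 2 * t * v₁ ^ 3 := by linear_combination -h1 + v₁ * h1'
  have c2 : c = a * v₂ ^ 2 - 2 * t * v₂ ^ 3 := by linear_combination -h2 + v₂ * h2'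
  have c3 : 4 * t ^ 2 * c = a * z ^ 2 - z ^ 3 := by
    apply mul_left_cancel₀ two
    linear_combination -h3 + z * h3'
  -- `2 t v₁`, `2 t v₂` and `z` are the roots of `Y³ - a Y² + 4 t² c`.
  have e1 : a * (2 * t * v₁ + z) = (2 * t * v₁) ^ 2 + 2 * t * v₁ * z + z ^ 2 := by
    apply mul_left_cancel₀ h13
    linear_combination -4 * t ^ 2 * c1 + c3
  have e2 : a * (2 * t * v₂ + z) = (2 * t * v₂) ^ 2 + 2 * t * v₂ * z + z ^ 2 := by
    apply mul_left_cancel₀ h23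
    linear_combination -4 * t ^ 2 * c2 + c3
  have ha : a = 2 * t * v₁ + 2 * t * v₂ + z := by
    have : 2 * t * (2 * d) ≠ 0 := by simp [ht, hd0]
    apply mul_left_cancel₀ this
    linear_combination e1 - e2 - 2 * t * (a - 2 * t * v₁ - 2 * t * v₂ - z) * hd
  have sym2 : 2 * t * v₁ * v₂ + (v₁ + v₂) * z = 0 := by
    have : 2 * t ≠ 0 := by simp [ht]
    apply mul_left_cancel₀ this
    rw [ha] at e1
    linear_combination e1
  obtain rfl : v₁ = v₂ + 2 * d := by linear_combination hd
  have zd : z * d = 1 - t * (v₂ + d) * d := by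
    apply mul_left_cancel₀ (mul_ne_zero two two)
    linear_combination -h1' + h2' - 4 * d * ha
  have sig : v₂ + d = t * d ^ 3 := by
    apply mul_left_cancel₀ two
    linear_combination d * sym2 - 2 * (v₂ + d) * zd
  obtain rfl : v₂ = t * d ^ 3 - d := by linear_combination sig
  have ad : a * d = 1 + 3 * t ^ 2 * d ^ 4 := by linear_combination d * ha + zd
  refine ⟨ad, ?_⟩
  have zd' : z * d = 1 - t ^ 2 * d ^ 4 := by linear_combination zd
  have main : 1 + 3 * z ^ 2 - 4 * a * z
      - t * (3 * t * (t * d ^ 3 + d) ^ 2 + 3 * t * (t * d ^ 3 - d) ^ 2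
        - 4 * a * (t * d ^ 3) - 8 * t) * 2 = 0 := by
    linear_combination h3' - 2 * t * h1' - 2 * t * h2'
  linear_combination d ^ 2 * main - 3 * (z * d + (1 - t ^ 2 * d ^ 4)) * zd'
    + 4 * a * d * zd' + (4 * (1 - t ^ 2 * d ^ 4) - 8 * t ^ 2 * d ^ 4) * ad

/-- Elimination of the half-difference `d` between the two equations of
`critical_elimination`, with `a = 1 + 2 s T`. The factor `A³` divided out comes from the
pseudo-division of `3 s d⁴ - a d + 1` by a quadratic polynomial in `d` with leading
coefficient `A`. -/
lemma final_elimination {R : Type*} [CommRing R] [IsDomain R] [CharZero R] (s T d : R)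
    (hm : (1 + 2 * s * T) * d = 1 + 3 * s * d ^ 4)
    (hq : (1 + 16 * s) * d ^ 2 - 1 - 18 * (s * d ^ 4) + 27 * (s * d ^ 4) ^ 2 = 0)
    (hs : s ≠ 0) (hA : 3 * (1 + 2 * s * T) ^ 2 + 1 + 16 * s ≠ 0) :
    (-1 + 48 * s - 576 * s ^ 2 - 256 * s ^ 3)
      + (1 - 60 * s + 912 * s ^ 2 - 512 * s ^ 3) * T
      + (10 * s - 312 * s ^ 2 + 624 * s ^ 3 - 512 * s ^ 4) * T ^ 2
      + (45 * s ^ 2 - 504 * s ^ 3 - 576 * s ^ 4) * T ^ 3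
      + (117 * s ^ 3 - 252 * s ^ 4 - 288 * s ^ 5) * T ^ 4
      + 189 * s ^ 4 * T ^ 5
      + 189 * s ^ 5 * T ^ 6
      + 108 * s ^ 6 * T ^ 7
      + 27 * s ^ 7 * T ^ 8 = 0 := by
  obtain ⟨m, hmT⟩ : ∃ m, m = 1 + 2 * s * T := ⟨_, rfl⟩
  obtain ⟨A, hAm⟩ : ∃ A, A = 3 * m ^ 2 + 1 + 16 * s := ⟨_, rfl⟩
  rw [← hmT] at hm hA
  rw [← hAm] at hA
  have quad : A * d ^ 2 = 12 * (m * d) - 8 := by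
    rw [hAm]
    linear_combination hq + (9 * (s * d ^ 4) + 3 * m * d - 9) * hm
  have quart : (A ^ 3 - 576 * s * (9 * m ^ 2 - A)) * (m * d)
      = A ^ 3 + 192 * s * (A - 18 * m ^ 2) := by
    linear_combination A ^ 3 * hm + 3 * s * (A ^ 2 * d ^ 2 + 12 * A * (m * d) + 144 * m ^ 2 - 8 * A) * quad
  have res : A * (A ^ 3 + 192 * s * (A - 18 * m ^ 2)) ^ 2
      - 12 * m ^ 2 * (A ^ 3 + 192 * s * (A - 18 * m ^ 2)) * (A ^ 3 - 576 * s * (9 * m ^ 2 - A))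
      + 8 * m ^ 2 * (A ^ 3 - 576 * s * (9 * m ^ 2 - A)) ^ 2 = 0 := by
    rw [← quart]
    linear_combination (A ^ 3 - 576 * s * (9 * m ^ 2 - A)) ^ 2 * m ^ 2 * quad
  have : (-256 : R) * s * A ^ 3 ≠ 0 := by simp [hs, hA]
  apply mul_left_cancel₀ this
  rw [mul_zero, ← res, hAm, hmT]
  ring

/-! ### Power series in `t` with polynomial coefficients -/

/-- The catalytic variable `x` (or `y`), as an element of `ℚ[x]⟦t⟧`; the series variable `t` is
`PowerSeries.X`. -/
def vX : PowerSeries (Polynomial ℚ) := PowerSeries.C Polynomial.X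

/-- The embedding of `ℚ⟦t⟧` into `ℚ[x]⟦t⟧`. -/
def cst : PowerSeries ℚ →+* PowerSeries (Polynomial ℚ) := PowerSeries.map Polynomial.C

/-- The embedding of `ℚ[x]⟦t⟧` into `ℚ[x][y]⟦t⟧`; `y` is the outer polynomial variable. -/
def inX : PowerSeries (Polynomial ℚ) →+* PowerSeries (Polynomial (Polynomial ℚ)) :=
  PowerSeries.map Polynomial.C

/-- The embedding of `ℚ[y]⟦t⟧` into `ℚ[x][y]⟦t⟧`, sending the variable to the outer one. -/
def inY : PowerSeries (Polynomial ℚ) →+* PowerSeries (Polynomial (Polynomial ℚ)) :=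
  PowerSeries.map (Polynomial.mapRingHom Polynomial.C)

/-- Evaluation `ℚ[x]⟦t⟧ → ℚ⟦t⟧` of the coefficients at a rational number. -/
def ev (r : ℚ) : PowerSeries (Polynomial ℚ) →+* PowerSeries ℚ :=
  PowerSeries.map (Polynomial.evalRingHom r)

/-- The derivative `∂/∂x` on `ℚ[x]⟦t⟧`. -/
def dX : Derivation ℚ (PowerSeries (Polynomial ℚ)) (PowerSeries (Polynomial ℚ)) :=
  Derivation.mk'
    { toFun := fun f => PowerSeries.mk fun n => Polynomial.derivative (PowerSeries.coeff n f)
      map_add' := fun f g => by ext1 n; simp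
      map_smul' := fun r f => by ext1 n; simp }
    (fun f g => by
      ext1 n
      simp only [LinearMap.coe_mk, AddHom.coe_mk, PowerSeries.coeff_mk, smul_eq_mul, map_add,
        PowerSeries.coeff_mul, Polynomial.derivative_sum, Polynomial.derivative_mul,
        Finset.sum_add_distrib]
      rw [add_comm]
      congr 1
      rw [← Finset.Nat.sum_antidiagonal_swap]
      exact Finset.sum_congr rfl fun _ _ => mul_comm _ _)

lemma coeff_dX (f : PowerSeries (Polynomial ℚ)) (n : ℕ) :
    PowerSeries.coeff n (dX f) = Polynomial.derivative (PowerSeries.coeff n f) := by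
  simp [dX]

@[simp] lemma dX_vX : dX vX = 1 := by
  ext1 n
  rw [coeff_dX, vX, PowerSeries.coeff_C, PowerSeries.coeff_one]
  split_ifs <;> simp

@[simp] lemma dX_t : dX PowerSeries.X = 0 := by
  ext1 n
  rw [coeff_dX, PowerSeries.coeff_X]
  split_ifs <;> simp

@[simp] lemma dX_cst (f : PowerSeries ℚ) : dX (cst f) = 0 := by
  ext1 n
  simp [coeff_dX, cst]

@[simp] lemma ev_vX (r : ℚ) : ev r vX = PowerSeries.C r := by simp [ev, vX]
@[simp] lemma ev_t (r : ℚ) : ev r PowerSeries.X = PowerSeries.X := by simp [ev]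
@[simp] lemma ev_cst (r : ℚ) (f : PowerSeries ℚ) : ev r (cst f) = f := by
  ext1 n; simp [ev, cst]
@[simp] lemma cst_t : cst PowerSeries.X = PowerSeries.X := by simp [cst]
@[simp] lemma inX_t : inX PowerSeries.X = PowerSeries.X := by simp [inX]
@[simp] lemma inY_t : inY PowerSeries.X = PowerSeries.X := by simp [inY]
lemma inY_cst (f : PowerSeries ℚ) : inY (cst f) = inX (cst f) := by
  ext1 n; simp [inY, inX, cst]
lemma inX_vX : inX vX = PowerSeries.C (Polynomial.C Polynomial.X) := by simp [inX, vX]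
lemma inY_vX : inY vX = PowerSeries.C Polynomial.X := by simp [inY, vX]

/-- The Gessel kernel, as an element of `ℚ[x][y]⟦t⟧`. -/
def kernel : PowerSeries (Polynomial (Polynomial ℚ)) :=
  inX vX * inY vX - PowerSeries.X *
    (1 + inY vX + inX vX ^ 2 * inY vX + inX vX ^ 2 * inY vX ^ 2)

/-- If every element of the kernel of `φ` is a multiple of `r`, then a series killed by `φ`
coefficientwise is a multiple of `r`. -/
lemma dvd_of_map_eq_zero {A B : Type*} [CommRing A] [CommRing B] (φ : A →+* B) (r : A)
    (hr : ∀ p, φ p = 0 → r ∣ p) (M : PowerSeries A) (hM : PowerSeries.map φ M = 0) :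
    ∃ N, M = PowerSeries.C r * N := by
  have h : ∀ n, r ∣ PowerSeries.coeff n M := fun n => hr _ (by
    rw [← PowerSeries.coeff_map, hM]; simp)
  choose N hN using h
  exact ⟨PowerSeries.mk N, by ext1 n; rw [PowerSeries.coeff_C_mul, PowerSeries.coeff_mk, hN]⟩

/-- Setting `x = 0` in `ℚ[x][y]`. -/
def x0 : Polynomial (Polynomial ℚ) →+* Polynomial ℚ :=
  Polynomial.mapRingHom (Polynomial.evalRingHom 0)

/-- Setting `y = 0` in `ℚ[x][y]`. -/
def y0 : Polynomial (Polynomial ℚ) →+* Polynomial ℚ := Polynomial.evalRingHom 0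

lemma dvd_of_x0 (p : Polynomial (Polynomial ℚ)) (hp : x0 p = 0) :
    Polynomial.C Polynomial.X ∣ p := by
  rw [Polynomial.C_dvd_iff_dvd_coeff]
  intro i
  rw [Polynomial.X_dvd_iff, Polynomial.coeff_zero_eq_eval_zero]
  have := congrArg (fun q => Polynomial.coeff q i) hp
  simpa [x0, Polynomial.coeff_map] using this

lemma dvd_of_y0 (p : Polynomial (Polynomial ℚ)) (hp : y0 p = 0) : Polynomial.X ∣ p := by
  rw [Polynomial.X_dvd_iff, Polynomial.coeff_zero_eq_eval_zero]
  simpa [y0] using hp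

lemma x0_kernel : PowerSeries.map x0 kernel = -PowerSeries.X * (1 + vX) := by
  rw [kernel, inX_vX, inY_vX, vX]
  simp [x0]

lemma y0_kernel : PowerSeries.map y0 kernel = -PowerSeries.X := by
  rw [kernel, inX_vX, inY_vX]
  simp [y0]

/-- The kernel is coprime to `x`, as it does not vanish at `x = 0`. -/
lemma x_dvd_of_kernel (F M : PowerSeries (Polynomial (Polynomial ℚ)))
    (h : inX vX * F = kernel * M) : ∃ N, M = inX vX * N := by
  rw [inX_vX] at h ⊢
  refine dvd_of_map_eq_zero x0 _ dvd_of_x0 M ?_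
  have := congrArg (PowerSeries.map x0) h
  rw [map_mul, map_mul, x0_kernel] at this
  have h1 : (1 + vX) ≠ 0 := fun h => by
    simpa [ev_vX] using congrArg (fun q => PowerSeries.constantCoeff (ev 0 q)) h
  have h2 : -PowerSeries.X * (1 + vX) ≠ 0 := mul_ne_zero (neg_ne_zero.2 PowerSeries.X_ne_zero) h1
  have h3 : PowerSeries.map x0 (PowerSeries.C (Polynomial.C Polynomial.X)) = 0 := by simp [x0]
  rw [h3, zero_mul] at this
  exact (mul_eq_zero.1 this.symm).resolve_left h2

/-- The kernel is coprime to `y`, as it does not vanish at `y = 0`. -/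
lemma y_dvd_of_kernel (F M : PowerSeries (Polynomial (Polynomial ℚ)))
    (h : inY vX * F = kernel * M) : ∃ N, M = inY vX * N := by
  rw [inY_vX] at h ⊢
  refine dvd_of_map_eq_zero y0 _ dvd_of_y0 M ?_
  have := congrArg (PowerSeries.map y0) h
  rw [map_mul, map_mul, y0_kernel] at this
  simpa [y0, PowerSeries.X_ne_zero] using this.symm

/-- The invariant lemma: a separated series without poles which is divisible by the kernel and
whose `x`-part vanishes at `x = 0` is zero. By induction, the coefficient of `tⁿ` in the quotient
`N` is zero: modulo lower ones, the kernel acts as multiplication by `xy`, and setting `x = 0`, then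
`y = 0`, kills both parts of the left-hand side. -/
lemma invariant_separated (e h : PowerSeries (Polynomial ℚ))
    (N : PowerSeries (Polynomial (Polynomial ℚ)))
    (H : inX PowerSeries.X ^ 2 * (1 + inY vX) ^ 3 * (inX vX * inX e) - inY h = kernel * N) :
    e = 0 ∧ h = 0 := by
  have hN : ∀ n, PowerSeries.coeff n N = 0 := by
    intro n
    induction n using Nat.strong_induction_on with
    | _ n ih =>
      have hn := congrArg (PowerSeries.coeff n) H
      have hK : PowerSeries.coeff n (kernel * N) =
          Polynomial.C Polynomial.X * Polynomial.X * PowerSeries.coeff n N := by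
        rw [kernel, inX_vX, inY_vX, sub_mul, mul_assoc PowerSeries.X, map_sub, ← map_mul,
          PowerSeries.coeff_C_mul]
        convert sub_zero _
        cases n with
        | zero => simp
        | succ n =>
          rw [PowerSeries.coeff_succ_X_mul]
          simp only [← map_pow, ← map_mul, ← map_one PowerSeries.C, ← map_add]
          rw [PowerSeries.coeff_C_mul, ih n (Nat.lt_succ_self n), mul_zero]
      obtain ⟨k, hk⟩ : ∃ k : Polynomial ℚ, PowerSeries.coeff n
          (inX PowerSeries.X ^ 2 * (1 + inY vX) ^ 3 * (inX vX * inX e)) =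
          (1 + Polynomial.X) ^ 3 * Polynomial.C (Polynomial.X * k) := by
        rw [inX_vX, inY_vX, inX_t]
        have : PowerSeries.X ^ 2 * (1 + PowerSeries.C Polynomial.X) ^ 3
            * (PowerSeries.C (Polynomial.C Polynomial.X) * inX e) =
            PowerSeries.C ((1 + Polynomial.X) ^ 3 * Polynomial.C Polynomial.X)
              * (inX (PowerSeries.X ^ 2 * e)) := by
          simp only [map_mul, map_pow, map_add, map_one, inX_t]
          ring
        rw [this, PowerSeries.coeff_C_mul, inX, PowerSeries.coeff_map]
        exact ⟨PowerSeries.coeff n (PowerSeries.X ^ 2 * e), by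
          rw [Polynomial.C_mul, mul_assoc]⟩
      rw [hK, map_sub, hk] at hn
      have hx := congrArg x0 hn
      have hy0 : PowerSeries.coeff n (inY h) = 0 := by
        rw [inY, PowerSeries.coeff_map]
        have : PowerSeries.coeff n h = 0 := by
          have hid : ∀ p : Polynomial ℚ, x0 (Polynomial.mapRingHom Polynomial.C p) = p := by
            intro p; ext i; simp [x0]
          rw [map_sub, inY, PowerSeries.coeff_map, hid] at hx
          simpa [x0] using hx
        rw [this, map_zero]
      rw [hy0, sub_zero] at hn
      have hy := congrArg y0 hn
      have hk0 : Polynomial.X * k = 0 := by simpa [y0] using hy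
      rw [hk0, map_zero, mul_zero] at hn
      simpa using hn.symm
  have hN0 : N = 0 := by ext1 n; simpa using hN n
  rw [hN0, mul_zero, sub_eq_zero] at H
  have h0 : h = 0 := by
    have := congrArg (PowerSeries.map x0) H
    have hid : PowerSeries.map x0 (inY h) = h := by
      ext n i; simp [x0, inY]
    rw [hid] at this
    rw [← this]
    simp [inX_vX, x0]
  refine ⟨?_, h0⟩
  rw [h0, map_zero] at H
  have := congrArg (PowerSeries.map y0) H
  have hid : ∀ f, PowerSeries.map y0 (inX f) = f := by
    intro f; ext n i; simp [y0, inX]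
  rw [map_mul, map_mul, map_mul, hid, hid] at this
  have hv : vX ≠ 0 := fun h => by
    simpa [ev_vX] using congrArg (fun q => PowerSeries.constantCoeff (ev 1 q)) h
  have h1 : PowerSeries.map y0 ((1 + inY vX) ^ 3) = 1 := by simp [inY_vX, y0]
  rw [h1, map_zero, map_pow, hid] at this
  simpa [hv, PowerSeries.X_ne_zero] using this

/-! ### Generating functions and the functional equation -/

/-- The generating polynomial `∑ g(n;i,j) xⁱ yʲ` of Gessel walks of length `n`, in `ℚ[x][y]`. -/
def polyG (n : ℕ) : Polynomial (Polynomial ℚ) :=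
  ∑ j ∈ Finset.range (n + 1), ∑ i ∈ Finset.range (n + 1),
    Polynomial.monomial j (Polynomial.monomial i (g n i j : ℚ))

lemma coeff_polyG (n i j : ℕ) : ((polyG n).coeff j).coeff i = (g n i j : ℚ) := by
  have h : ∀ i' j' : ℕ, ((Polynomial.monomial j'
      (Polynomial.monomial i' (g n i' j' : ℚ))).coeff j).coeff i
      = if j' = j then if i' = i then (g n i j : ℚ) else 0 else 0 := by
    intro i' j'
    rw [Polynomial.coeff_monomial]
    split_ifs with h1 h2
    · subst h1 h2; simp
    · rw [Polynomial.coeff_monomial, if_neg h2]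
    · simp
  simp only [polyG, Polynomial.finsetSum_coeff, h]
  by_cases hj : j ∈ Finset.range (n + 1)
  · by_cases hi : i ∈ Finset.range (n + 1)
    · simp [Finset.sum_ite_eq', hi, hj]
    · rw [g_large n i j (by simp at hi; left; omega)]
      simp
  · rw [g_large n i j (by simp at hj; right; omega)]
    simp

/-- The generating function `G(t;x,y)`, in `ℚ[x][y]⟦t⟧`. -/
def gfXY : PowerSeries (Polynomial (Polynomial ℚ)) := PowerSeries.mk polyG

/-- The generating function `G(t;x,0)`, in `ℚ[x]⟦t⟧`. -/
def gfX : PowerSeries (Polynomial ℚ) := PowerSeries.mk fun n => (polyG n).coeff 0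

/-- The generating function `G(t;0,y)`, in `ℚ[y]⟦t⟧`. -/
def gfY : PowerSeries (Polynomial ℚ) :=
  PowerSeries.mk fun n => (polyG n).map (Polynomial.evalRingHom 0)

/-- The generating function of Gessel walks ending at `(i, 0)`. -/
def gfRow (i : ℕ) : PowerSeries ℚ := PowerSeries.mk fun n => (g n i 0 : ℚ)

lemma gfRow_zero : gfRow 0 = GesselGF00 := rfl

lemma coeff_coeff_gfX (n i : ℕ) :
    (PowerSeries.coeff n gfX).coeff i = PowerSeries.coeff n (gfRow i) := by
  simp [gfX, gfRow, coeff_polyG]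

lemma coeff_coeff_gfY (n j : ℕ) : (PowerSeries.coeff n gfY).coeff j = (g n 0 j : ℚ) := by
  rw [gfY, PowerSeries.coeff_mk, Polynomial.coeff_map, Polynomial.coe_evalRingHom,
    ← Polynomial.coeff_zero_eq_eval_zero, coeff_polyG, Nat.cast_zero]

lemma gfX_decomp : ∃ W, gfX = cst GesselGF00 + cst (gfRow 1) * vX + cst (gfRow 2) * vX ^ 2
    + W * vX ^ 3 := by
  refine ⟨PowerSeries.mk fun n => (PowerSeries.coeff n gfX).divX.divX.divX, ?_⟩
  ext n i
  rw [vX, ← map_pow, ← map_pow]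
  simp only [map_add, PowerSeries.coeff_mul_C, PowerSeries.coeff_mk, cst, PowerSeries.coeff_map,
    Polynomial.coeff_add, Polynomial.coeff_mul_X_pow', Polynomial.coeff_C, Polynomial.coeff_divX,
    coeff_coeff_gfX, ← gfRow_zero]
  rw [← pow_one Polynomial.X, Polynomial.coeff_mul_X_pow', Polynomial.coeff_C]
  rcases i with _ | _ | _ | i <;> simp

lemma gfY_decomp : ∃ W, gfY = cst GesselGF00 + W * vX := by
  refine ⟨PowerSeries.mk fun n => (PowerSeries.coeff n gfY).divX, ?_⟩
  ext n i
  rw [vX]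
  simp only [map_add, PowerSeries.coeff_mul_C, PowerSeries.coeff_mk, cst, PowerSeries.coeff_map,
    Polynomial.coeff_add, Polynomial.coeff_C]
  rw [← pow_one Polynomial.X, Polynomial.coeff_mul_X_pow']
  rcases i with _ | i <;> simp [coeff_coeff_gfY, GesselGF00, Polynomial.coeff_divX]

/-- The step recursion `g_succ` for generating polynomials, multiplied by `xy`. The subtracted
terms account for the steps that would leave the quadrant. -/
lemma polyG_succ (n : ℕ) :
    Polynomial.C Polynomial.X * (Polynomial.X * polyG (n + 1)) =
      polyG n + Polynomial.X * polyG n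
      + Polynomial.C Polynomial.X * (Polynomial.C Polynomial.X * (Polynomial.X * polyG n))
      + Polynomial.C Polynomial.X * (Polynomial.C Polynomial.X *
          (Polynomial.X * (Polynomial.X * polyG n)))
      - Polynomial.C (PowerSeries.coeff n gfX)
      - (PowerSeries.coeff n gfY).map Polynomial.C
      - Polynomial.X * (PowerSeries.coeff n gfY).map Polynomial.C
      + Polynomial.C (Polynomial.C (PowerSeries.coeff n GesselGF00)) := by
  have hr : ∀ i : ℕ, PowerSeries.coeff n (gfRow i) = (g n i 0 : ℚ) := fun i => by simp [gfRow]
  have hq : PowerSeries.coeff n GesselGF00 = (g n 0 0 : ℚ) := by simp [GesselGF00]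
  ext j i
  rcases j with _ | _ | j <;> rcases i with _ | _ | i <;>
  simp only [Polynomial.coeff_add, Polynomial.coeff_sub, Polynomial.coeff_C_mul,
    Polynomial.coeff_X_mul, Polynomial.mul_coeff_zero,
    Polynomial.coeff_X_zero, Polynomial.coeff_C_zero, Polynomial.coeff_C_succ,
    Polynomial.coeff_map, Polynomial.coeff_zero, coeff_polyG, coeff_coeff_gfX, coeff_coeff_gfY,
    hr, hq, zero_mul, mul_zero, Nat.cast_zero, add_zero, sub_zero, zero_add]
  all_goals try ring1
  all_goals
    have hn1 : ∀ j, g n (-1) j = 0 := fun j => g_neg n _ _ (by simp)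
    have hn2 : ∀ i, g n i (-1) = 0 := fun i => g_neg n _ _ (by simp)
    rw [g_succ _ _ _ (by positivity) (by positivity)]
    simp [hn1, hn2] <;> ring

/-- The functional equation of Gessel walks in the quadrant. -/
lemma functional_equation : kernel * gfXY = inX vX * inY vX - PowerSeries.X * inX gfX
    - PowerSeries.X * (1 + inY vX) * inY gfY + PowerSeries.X * inX (cst GesselGF00) := by
  -- A coefficientwise description of `A = t B`, in order to compare coefficients of `tⁿ⁺¹`
  -- with coefficients of `tⁿ`.
  have key : ∀ A B : PowerSeries (Polynomial (Polynomial ℚ)), A - PowerSeries.X * B = 0 ↔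
      PowerSeries.coeff 0 A = 0 ∧ ∀ n, PowerSeries.coeff (n + 1) A = PowerSeries.coeff n B := by
    intro A B
    constructor
    · intro h
      rw [sub_eq_zero] at h
      subst h
      exact ⟨by simp, fun n => PowerSeries.coeff_succ_X_mul _ _⟩
    · rintro ⟨h0, h1⟩
      rw [sub_eq_zero]
      ext1 n
      cases n with
      | zero => rw [h0]; simp
      | succ n => rw [h1, PowerSeries.coeff_succ_X_mul]
  have h := (key (inX vX * (inY vX * gfXY) - inX vX * inY vX)
    (gfXY + inY vX * gfXY + inX vX * (inX vX * (inY vX * gfXY))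
      + inX vX * (inX vX * (inY vX * (inY vX * gfXY))) - inX gfX - inY gfY
      - inY vX * inY gfY + inX (cst GesselGF00))).2 ?_
  · unfold kernel
    linear_combination h
  · rw [inX_vX, inY_vX]
    constructor
    · rw [← map_mul, map_sub, PowerSeries.coeff_C_mul, PowerSeries.coeff_C_mul, gfXY,
        PowerSeries.coeff_mk]
      simp [polyG, g_zero]
    · intro n
      rw [← map_mul]
      simp only [map_add, map_sub, PowerSeries.coeff_C_mul, gfXY, PowerSeries.coeff_mk]
      rw [PowerSeries.coeff_C, if_neg (Nat.succ_ne_zero n), sub_zero, polyG_succ]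
      simp [inX, inY, cst]

/-! ### The pairs of invariants -/

lemma map_numX {A B : Type*} [CommRing A] [CommRing B] (φ : A →+* B) (x t p a b c : A) :
    φ (numX x t p a b c) = numX (φ x) (φ t) (φ p) (φ a) (φ b) (φ c) := by
  simp [numX]

lemma map_numY {A B : Type*} [CommRing A] [CommRing B] (φ : A →+* B) (y t z a b c : A) :
    φ (numY y t z a b c) = numY (φ y) (φ t) (φ z) (φ a) (φ b) (φ c) := by
  simp [numY]

/-- The series `t α`, where `α = 1/t + 2 t G(t;0,0)`. -/
def serA : PowerSeries ℚ := 1 + 2 * PowerSeries.X ^ 2 * GesselGF00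

/-- The series `β`. -/
def serB : PowerSeries ℚ :=
  -2 - GesselGF00 + 2 * PowerSeries.X * gfRow 1 - PowerSeries.X ^ 2 * GesselGF00 ^ 2

/-- The series `t γ`. -/
def serC : PowerSeries ℚ := 1 - PowerSeries.X * gfRow 1 + 2 * PowerSeries.X ^ 2 * gfRow 2

/-- The series `x v(x) = 1 + t x G(t;x,0)`. -/
def serP : PowerSeries (Polynomial ℚ) := 1 + PowerSeries.X * vX * gfX

/-- The series `t (1 + y) v(y)`. -/
def serZ : PowerSeries (Polynomial ℚ) := vX - PowerSeries.X ^ 2 * (1 + vX) ^ 2 * gfY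
  + PowerSeries.X ^ 2 * (1 + vX) * cst GesselGF00

/-- Algebraic equations for `G(t;x,0)` and `G(t;0,y)`, which state that
`I₀ v = J₀ v = -v³ + α v² + β v + γ`. -/
lemma invariant_equations :
    numX vX PowerSeries.X serP (cst serA) (cst serB) (cst serC) = 0 ∧
    numY vX PowerSeries.X serZ (cst serA) (cst serB) (cst serC) = 0 := by
  obtain ⟨W, hW⟩ := gfX_decomp
  obtain ⟨V, hV⟩ := gfY_decomp
  obtain ⟨e, he⟩ := numX_dvd vX PowerSeries.X (cst GesselGF00) (cst (gfRow 1)) (cst (gfRow 2)) W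
  obtain ⟨h, hh⟩ := numY_dvd vX PowerSeries.X (cst GesselGF00) V (cst serA) (cst serB) (cst serC)
  have hX : numX vX PowerSeries.X serP (cst serA) (cst serB) (cst serC) = vX ^ 4 * e := by
    rw [← he, serP, hW]
    simp [serA, serB, serC, map_ofNat]
  have hY : numY vX PowerSeries.X serZ (cst serA) (cst serB) (cst serC) = vX * h := by
    rw [← hh, serZ, hV]
  obtain ⟨M, hM⟩ := kernel_dvd (inX vX) (inY vX) PowerSeries.X (inX gfX) (inY gfY)
    (inX (cst GesselGF00)) gfXY (inX (cst serA)) (inX (cst serB)) (inX (cst serC))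
    functional_equation
  have hX' := congrArg inX hX
  have hY' := congrArg inY hY
  rw [map_numX, serP] at hX'
  rw [map_numY, serZ] at hY'
  simp only [inY_cst, inX_t, inY_t, map_add, map_sub, map_mul, map_pow, map_one] at hX' hY'
  change _ = kernel * M at hM
  rw [hX', hY'] at hM
  have hx : inX vX ≠ 0 := fun h0 => by
    rw [inX_vX] at h0
    simpa using congrArg PowerSeries.constantCoeff h0
  have hy : inY vX ≠ 0 := fun h0 => by
    rw [inY_vX] at h0
    simpa using congrArg PowerSeries.constantCoeff h0
  -- The kernel is coprime to `x` and `y`, so the factor `x³ y` can be removed.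
  obtain ⟨F, hF⟩ : ∃ F, F = inX PowerSeries.X ^ 2 * (1 + inY vX) ^ 3 * (inX vX * inX e) - inY h :=
    ⟨_, rfl⟩
  have h1 : inX vX * (inX vX * (inX vX * (inY vX * F))) = kernel * M := by
    rw [← hM, hF, inX_t]; ring
  obtain ⟨M₁, rfl⟩ := x_dvd_of_kernel _ _ h1
  rw [mul_left_comm kernel] at h1
  have h2 := mul_left_cancel₀ hx h1
  obtain ⟨M₂, rfl⟩ := x_dvd_of_kernel _ _ h2
  rw [mul_left_comm kernel] at h2
  have h3 := mul_left_cancel₀ hx h2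
  obtain ⟨M₃, rfl⟩ := x_dvd_of_kernel _ _ h3
  rw [mul_left_comm kernel] at h3
  have h4 := mul_left_cancel₀ hx h3
  obtain ⟨N, rfl⟩ := y_dvd_of_kernel _ _ h4
  rw [mul_left_comm kernel] at h4
  have h5 := mul_left_cancel₀ hy h4
  rw [hF] at h5
  obtain ⟨rfl, rfl⟩ := invariant_separated e h N h5
  exact ⟨by rw [hX, mul_zero], by rw [hY, mul_zero]⟩

/-! ### Critical points -/

lemma dX_numX (p : PowerSeries (Polynomial ℚ)) (a b c : PowerSeries ℚ) :
    dX (numX vX PowerSeries.X p (cst a) (cst b) (cst c)) =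
      (2 * vX * (vX - PowerSeries.X * (1 + vX ^ 2)) + (1 + vX ^ 2) * (1 - 2 * PowerSeries.X * vX)) * p
      + (1 + vX ^ 2) * (vX - PowerSeries.X * (1 + vX ^ 2)) * dX p
      - (-3 * PowerSeries.X * p ^ 2 * dX p + cst a * p ^ 2 + 2 * cst a * vX * p * dX p
        + 2 * PowerSeries.X * cst b * vX * p + PowerSeries.X * cst b * vX ^ 2 * dX p
        + 3 * cst c * vX ^ 2) := by
  unfold numX
  simp only [map_add, map_sub, map_neg, Derivation.leibniz, Derivation.leibniz_pow, dX_vX, dX_t,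
    dX_cst, Derivation.map_one_eq_zero, smul_eq_mul, nsmul_eq_mul, neg_mul]
  push_cast
  ring

lemma dX_numY (z : PowerSeries (Polynomial ℚ)) (a b c : PowerSeries ℚ) :
    dX (numY vX PowerSeries.X z (cst a) (cst b) (cst c)) =
      (-4 * PowerSeries.X ^ 2 * vX * (1 - vX ^ 2) + 2 * vX) * z
      + (PowerSeries.X ^ 2 * (1 - vX ^ 2) ^ 2 + vX ^ 2) * dX z
      + z ^ 3 + 3 * vX * z ^ 2 * dX z
      - cst a * ((1 + 2 * vX) * z ^ 2 + 2 * (1 + vX) * vX * z * dX z)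
      - PowerSeries.X ^ 2 * cst b * ((2 * (1 + vX) * vX + (1 + vX) ^ 2) * z
        + (1 + vX) ^ 2 * vX * dX z)
      - PowerSeries.X ^ 2 * cst c * (3 * (1 + vX) ^ 2 * vX + (1 + vX) ^ 3) := by
  unfold numY
  simp only [map_add, map_sub, Derivation.leibniz, Derivation.leibniz_pow, dX_vX, dX_t,
    dX_cst, Derivation.map_one_eq_zero, smul_eq_mul, nsmul_eq_mul]
  push_cast
  ring

/-- The function `I₀` has a critical point at `x = 1`, hence `-v² + α v + β + γ / v` has one at
the value of `v(x)` there. The two equations express the critical value and the vanishing of the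
derivative. For the second one, the derivative of the equation `numX = 0`, corrected by a multiple
of the equation itself, factors as a nonzero multiple of `v'(1)` times the required expression. -/
lemma critical_one : ∃ v : PowerSeries ℚ, PowerSeries.constantCoeff v = 1 ∧
    (2 - 4 * PowerSeries.X) * v
      = -PowerSeries.X * v ^ 3 + serA * v ^ 2 + PowerSeries.X * serB * v + serC ∧
    3 * PowerSeries.X * v ^ 2 - 2 * serA * v - PowerSeries.X * serB + 2 - 4 * PowerSeries.X = 0 := by
  have h := invariant_equations.1
  have hd := congrArg (fun f => ev 1 (dX f)) h
  have hv := congrArg (ev 1) h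
  rw [map_numX] at hv
  simp only [dX_numX] at hd
  simp only [map_add, map_sub, map_mul, map_pow, map_neg, map_one, map_zero, map_ofNat, ev_vX,
    ev_t, ev_cst, numX] at hd hv
  have c1 : PowerSeries.constantCoeff (ev 1 serP) = 1 := by simp [serP]
  have c2 : PowerSeries.constantCoeff (ev 1 (dX serP)) = 0 := by
    simp [serP, Derivation.leibniz]
  refine ⟨ev 1 serP, c1, by linear_combination hv, ?_⟩
  have hne : ev 1 (dX serP) - ev 1 serP ≠ 0 := fun h0 => by
    have := congrArg PowerSeries.constantCoeff h0
    simp [c1, c2] at this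
  apply mul_left_cancel₀ hne
  linear_combination hd - 3 * hv

/-- The critical point `x = -1` of `I₀`, where `v = -p` for `p = x v`. -/
lemma critical_neg_one : ∃ v : PowerSeries ℚ, PowerSeries.constantCoeff v = -1 ∧
    (-2 - 4 * PowerSeries.X) * v
      = -PowerSeries.X * v ^ 3 + serA * v ^ 2 + PowerSeries.X * serB * v + serC ∧
    3 * PowerSeries.X * v ^ 2 - 2 * serA * v - PowerSeries.X * serB - 2 - 4 * PowerSeries.X = 0 := by
  have h := invariant_equations.1
  have hd := congrArg (fun f => ev (-1) (dX f)) h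
  have hv := congrArg (ev (-1)) h
  rw [map_numX] at hv
  simp only [dX_numX] at hd
  simp only [map_add, map_sub, map_mul, map_pow, map_neg, map_one, map_zero, map_ofNat, ev_vX,
    ev_t, ev_cst, numX] at hd hv
  have c1 : PowerSeries.constantCoeff (ev (-1) serP) = 1 := by simp [serP]
  have c2 : PowerSeries.constantCoeff (ev (-1) (dX serP)) = 0 := by
    simp [serP, Derivation.leibniz]
  refine ⟨-ev (-1) serP, by simp [c1], by linear_combination -hv, ?_⟩
  have hne : ev (-1) (dX serP) + ev (-1) serP ≠ 0 := fun h0 => by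
    have := congrArg PowerSeries.constantCoeff h0
    simp [c1, c2] at this
  apply mul_left_cancel₀ hne
  linear_combination hd + 3 * hv

/-- At `y = 1`, the function `J₀` has a critical point; here `z = 2 t v`. -/
lemma critical_y : ∃ z : PowerSeries ℚ, PowerSeries.constantCoeff z = 1 ∧
    z + z ^ 3 - 2 * serA * z ^ 2 - 4 * PowerSeries.X ^ 2 * serB * z
      - 8 * PowerSeries.X ^ 2 * serC = 0 ∧
    1 + 3 * z ^ 2 - 4 * serA * z - 4 * PowerSeries.X ^ 2 * serB = 0 := by
  have h := invariant_equations.2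
  have hd := congrArg (fun f => ev 1 (dX f)) h
  have hv := congrArg (ev 1) h
  rw [map_numY] at hv
  simp only [dX_numY] at hd
  simp only [map_add, map_sub, map_mul, map_pow, map_neg, map_one, map_zero, map_ofNat, ev_vX,
    ev_t, ev_cst, numY] at hd hv
  have c1 : PowerSeries.constantCoeff (ev 1 serZ) = 1 := by simp [serZ]
  have c2 : PowerSeries.constantCoeff (ev 1 (dX serZ)) = 1 := by
    simp [serZ, Derivation.leibniz, Derivation.leibniz_pow]
  refine ⟨ev 1 serZ, c1, by linear_combination hv, ?_⟩
  have hne : 2 * ev 1 (dX serZ) - ev 1 serZ ≠ 0 := fun h0 => by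
    have := congrArg PowerSeries.constantCoeff h0
    simp only [map_sub, map_mul, map_ofNat, map_zero, c1, c2] at this
    norm_num at this
  apply mul_left_cancel₀ hne
  linear_combination 2 * hd - 5 * hv

/-- `P(G(t;0,0), t²) = 0` for the explicit polynomial `P` of Corollary 2. -/
theorem gesselGF00_explicit_annihilating_polynomial :
    (-1 + 48 * s - 576 * s ^ 2 - 256 * s ^ 3)
      + (1 - 60 * s + 912 * s ^ 2 - 512 * s ^ 3) * GesselGF00
      + (10 * s - 312 * s ^ 2 + 624 * s ^ 3 - 512 * s ^ 4) * GesselGF00 ^ 2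
      + (45 * s ^ 2 - 504 * s ^ 3 - 576 * s ^ 4) * GesselGF00 ^ 3
      + (117 * s ^ 3 - 252 * s ^ 4 - 288 * s ^ 5) * GesselGF00 ^ 4
      + 189 * s ^ 4 * GesselGF00 ^ 5
      + 189 * s ^ 5 * GesselGF00 ^ 6
      + 108 * s ^ 6 * GesselGF00 ^ 7
      + 27 * s ^ 7 * GesselGF00 ^ 8 = 0 := by
  have : CharZero (PowerSeries ℚ) := charZero_of_injective_ringHom PowerSeries.C_injective
  obtain ⟨v₁, k1, h1, h1'⟩ := critical_one
  obtain ⟨v₂, k2, h2, h2'⟩ := critical_neg_one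
  obtain ⟨z, k3, h3, h3'⟩ := critical_y
  have half : (2 : PowerSeries ℚ) * PowerSeries.C (1 / 2) = 1 := by
    rw [← map_ofNat (PowerSeries.C (R := ℚ)) 2, ← map_mul]
    norm_num
  have hd : v₁ - v₂ = 2 * (PowerSeries.C (1 / 2) * (v₁ - v₂)) := by
    linear_combination -(v₁ - v₂) * half
  have hne : ∀ f : PowerSeries ℚ, PowerSeries.constantCoeff f ≠ 0 → f ≠ 0 := by
    rintro f hf rfl
    exact hf (map_zero _)
  obtain ⟨hm, hq⟩ := critical_elimination PowerSeries.X serA serB serC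
    (PowerSeries.C (1 / 2) * (v₁ - v₂)) v₁ v₂ z h1 h1' h2 h2' h3 h3' hd PowerSeries.X_ne_zero
    (hne _ (by simp [k1, k2])) (hne _ (by simp [k3])) (hne _ (by simp [k3]))
  -- The leading coefficient of the quadratic equation for `d` has constant term `3 + 1`.
  refine final_elimination s GesselGF00 (PowerSeries.C (1 / 2) * (v₁ - v₂)) hm hq
    (pow_ne_zero 2 PowerSeries.X_ne_zero) (hne _ ?_)
  simp only [s, map_add, map_mul, map_pow, map_one, map_ofNat, PowerSeries.constantCoeff_X]
  norm_num
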